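/- Let n be a positive integer and let F be a field of characteristic p, where p is an odd rational prime with gcd(n,p) ≠ 1 (equivalently, p divides n). Then the F-vector space Der_F(F V_{8n}) of F-derivations of the group algebra F V_{8n} has dimension 4(2n−1) over F if n is odd, and dimension 8(n−1) over F if n is even. -/

import Mathlib

/-- The relators of the presentation
`V_{8n} = ⟨a, b ∣ a^{2n} = b⁴ = 1, (ba)² = 1, (b⁻¹a)² = 1⟩`,
where `a` is the generator indexed by `0` and `b` the one indexed by `1`.
(The relations `ba = a⁻¹b⁻¹` and `b⁻¹a = a⁻¹b` are equivalent to
`(ba)² = 1` and `(b⁻¹a)² = 1` respectively.) -/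
def V8nRels (n : ℕ) : Set (FreeGroup (Fin 2)) :=
  {(FreeGroup.of 0) ^ (2 * n), (FreeGroup.of 1) ^ 4,
   (FreeGroup.of 1 * FreeGroup.of 0) ^ 2,
   ((FreeGroup.of 1)⁻¹ * FreeGroup.of 0) ^ 2}

/-- The group `V_{8n}` of order `8n`. -/
abbrev V8n (n : ℕ) : Type := PresentedGroup (V8nRels n)

/-- The generator `a` of `V_{8n}`. -/
def aV (n : ℕ) : V8n n := PresentedGroup.of 0

/-- The generator `b` of `V_{8n}`. -/
def bV (n : ℕ) : V8n n := PresentedGroup.of 1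
/-- The `F`-vector space of `F`-derivations of an `F`-algebra `A`,
realized as the `F`-linear endomorphisms of `A` satisfying the Leibniz rule. -/
def fDerivations (F : Type*) [CommSemiring F] (A : Type*) [Ring A] [Algebra F A] :
    Submodule F (A →ₗ[F] A) where
  carrier := {d | ∀ x y : A, d (x * y) = d x * y + x * d y}
  zero_mem' := by intro x y; simp
  add_mem' := by
    intro d e hd he x y
    simp only [LinearMap.add_apply, hd x y, he x y, add_mul, mul_add]
    abel
  smul_mem' := by
    intro c d hd x y
    simp only [LinearMap.smul_apply, hd x y, smul_add, smul_mul_assoc, mul_smul_comm]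

/-! ### A concrete model of the group -/

/-- The sign `(-1)^j` for `j` in `ZMod 4`. -/
def sgn4 (j : ZMod 4) : ℤ := if j = 0 ∨ j = 2 then 1 else -1

/-- The additive map `k ↦ 2k` from `ZMod (2n)` to `ZMod 4`. -/
def wMap (n : ℕ) : ZMod (2 * n) →+ ZMod 4 :=
  ZMod.lift (2 * n) ⟨(AddMonoidHom.mulLeft (2 : ZMod 4)).comp (Int.castAddHom (ZMod 4)), by
    simp only [AddMonoidHom.comp_apply, Int.coe_castAddHom, AddMonoidHom.coe_mulLeft]
    push_cast
    rw [← mul_assoc]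
    have : (2 * 2 : ZMod 4) = 0 := by decide
    rw [this, zero_mul]⟩

lemma wMap_intCast (n : ℕ) (k : ℤ) : wMap n (k : ZMod (2 * n)) = 2 * (k : ZMod 4) := by
  simp [wMap]

lemma two_wMap (n : ℕ) (k : ZMod (2 * n)) : 2 * wMap n k = 0 := by
  obtain ⟨k, rfl⟩ := ZMod.intCast_surjective k
  rw [wMap_intCast, ← mul_assoc]
  have : (2 * 2 : ZMod 4) = 0 := by decide
  rw [this, zero_mul]

lemma sgn4_cases (j : ZMod 4) : sgn4 j = 1 ∨ sgn4 j = -1 := by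
  unfold sgn4; split_ifs <;> simp

lemma wMap_sgn (n : ℕ) (j : ZMod 4) (k : ZMod (2 * n)) :
    wMap n (sgn4 j • k) = wMap n k := by
  rcases sgn4_cases j with h | h <;> rw [h]
  · simp
  · rw [neg_smul, one_smul, map_neg, neg_eq_iff_add_eq_zero, ← two_mul, two_wMap]

/-- The concrete model: pairs `(i, j)` standing for `a^i b^j`. -/
@[ext] structure QMod (n : ℕ) where
  i : ZMod (2 * n)
  j : ZMod 4

namespace QMod

instance (n : ℕ) : Mul (QMod n) := ⟨fun x y => ⟨x.i + sgn4 x.j • y.i, x.j + y.j + x.j * wMap n y.i⟩⟩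
instance (n : ℕ) : One (QMod n) := ⟨⟨0, 0⟩⟩
instance (n : ℕ) : Inv (QMod n) := ⟨fun x => ⟨-(sgn4 x.j • x.i), -x.j + x.j * wMap n x.i⟩⟩

lemma mul_i {n : ℕ} (x y : QMod n) : (x * y).i = x.i + sgn4 x.j • y.i := rfl
lemma mul_j {n : ℕ} (x y : QMod n) : (x * y).j = x.j + y.j + x.j * wMap n y.i := rfl
lemma one_i {n : ℕ} : (1 : QMod n).i = 0 := rfl
lemma one_j {n : ℕ} : (1 : QMod n).j = 0 := rfl
lemma inv_i {n : ℕ} (x : QMod n) : (x⁻¹).i = -(sgn4 x.j • x.i) := rfl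
lemma inv_j {n : ℕ} (x : QMod n) : (x⁻¹).j = -x.j + x.j * wMap n x.i := rfl

lemma sgn_mul : ∀ j l w : ZMod 4, 2 * w = 0 → sgn4 (j + l + j * w) = sgn4 j * sgn4 l := by decide
lemma aux_assoc : ∀ u v : ZMod 4, 2 * u = 0 → 2 * v = 0 → u * v = 0 := by decide
lemma sgn_inv : ∀ j w : ZMod 4, 2 * w = 0 → sgn4 (-j + j * w) = sgn4 j := by decide
lemma aux_inv : ∀ j w : ZMod 4, 2 * w = 0 → -j + j * w + j + (-j + j * w) * w = 0 := by decide

instance (n : ℕ) : Group (QMod n) := Group.ofLeftAxioms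
  (by
    intro x y z
    ext
    · simp only [mul_i, mul_j]
      rw [sgn_mul _ _ _ (two_wMap n _), smul_add, mul_smul, add_assoc]
    · simp only [mul_i, mul_j, map_add, wMap_sgn]
      have := aux_assoc _ _ (two_wMap n y.i) (two_wMap n z.i)
      linear_combination x.j * this)
  (by
    intro x
    ext
    · simp only [mul_i, one_i, one_j]
      simp [sgn4]
    · simp only [mul_j, one_j]
      simp)
  (by
    intro x
    ext
    · simp only [mul_i, inv_i, inv_j, one_i]
      rw [sgn_inv _ _ (two_wMap n _)]; simp
    · simp only [mul_j, inv_j, one_j]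
      exact aux_inv _ _ (two_wMap n _))

/-- The image of `a`. -/
def qa (n : ℕ) : QMod n := ⟨1, 0⟩
/-- The image of `b`. -/
def qb (n : ℕ) : QMod n := ⟨0, 1⟩

lemma qa_zpow (n : ℕ) (k : ℤ) : qa n ^ k = ⟨k, 0⟩ := by
  have hs : sgn4 0 = 1 := by decide
  have key : ∀ k : ℤ, qa n * ⟨k, 0⟩ = ⟨(k + 1 : ℤ), 0⟩ := by
    intro k
    ext
    · simp [mul_i, qa, hs, add_comm]
    · simp [mul_j, qa]
  induction k using Int.induction_on with
  | zero => simp; rfl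
  | succ k ih => rw [add_comm, zpow_add, zpow_one, ih, key]; simp [add_comm]
  | pred k ih =>
    have := key (-k - 1)
    rw [sub_add_cancel] at this
    rw [sub_eq_add_neg, add_comm, zpow_add, zpow_neg_one, ih, ← this, inv_mul_cancel_left]
    simp [sub_eq_add_neg, add_comm]

lemma qb_zpow (n : ℕ) (k : ℤ) : qb n ^ k = ⟨0, k⟩ := by
  have key : ∀ k : ℤ, qb n * ⟨0, k⟩ = ⟨0, (k + 1 : ℤ)⟩ := by
    intro k
    ext
    · simp [mul_i, qb]
    · simp [mul_j, qb, add_comm]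
  induction k using Int.induction_on with
  | zero => simp; rfl
  | succ k ih => rw [add_comm, zpow_add, zpow_one, ih, key]; simp [add_comm]
  | pred k ih =>
    have := key (-k - 1)
    rw [sub_add_cancel] at this
    rw [sub_eq_add_neg, add_comm, zpow_add, zpow_neg_one, ih, ← this, inv_mul_cancel_left]
    simp [sub_eq_add_neg, add_comm]

lemma qab (n : ℕ) (k l : ℤ) : qa n ^ k * qb n ^ l = ⟨k, l⟩ := by
  rw [qa_zpow, qb_zpow]
  ext <;> simp [mul_i, mul_j]

end QMod

/-- `FreeGroup` generators to the model. -/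
def qGen (n : ℕ) : Fin 2 → QMod n := ![QMod.qa n, QMod.qb n]

lemma qGen_rels (n : ℕ) : ∀ r ∈ V8nRels n, FreeGroup.lift (qGen n) r = 1 := by
  intro r hr
  have h1 : sgn4 1 = -1 := by decide
  have hm1 : sgn4 (-1) = -1 := by decide
  have hw : wMap n 1 = 2 := by simpa using wMap_intCast n 1
  rcases hr with rfl | rfl | rfl | rfl
  · simp only [map_pow, FreeGroup.lift_apply_of, qGen, Matrix.cons_val_zero]
    rw [← zpow_natCast, QMod.qa_zpow]
    ext
    · rw [Int.cast_natCast, ZMod.natCast_self]; rfl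
    · rfl
  · simp only [map_pow, FreeGroup.lift_apply_of, qGen, Matrix.cons_val_one]
    change QMod.qb n ^ 4 = 1
    rw [← zpow_natCast, QMod.qb_zpow]
    ext
    · rfl
    · rfl
  · simp only [map_pow, map_mul, FreeGroup.lift_apply_of, qGen, Matrix.cons_val_one, Matrix.cons_val_zero, pow_two]
    ext
    · simp [QMod.mul_i, QMod.mul_j, QMod.qa, QMod.qb, h1, hw, QMod.one_i, show sgn4 (1+2) = -1 by decide]
    · simp [QMod.mul_i, QMod.mul_j, QMod.qa, QMod.qb, h1, hw, QMod.one_j]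
      decide
  · simp only [map_pow, map_mul, map_inv, FreeGroup.lift_apply_of, qGen, Matrix.cons_val_one, Matrix.cons_val_zero, pow_two]
    ext
    · simp [QMod.mul_i, QMod.mul_j, QMod.inv_i, QMod.inv_j, QMod.qa, QMod.qb, hm1, hw, QMod.one_i, show sgn4 (-1+-2) = -1 by decide]
    · simp [QMod.mul_i, QMod.mul_j, QMod.inv_i, QMod.inv_j, QMod.qa, QMod.qb, hm1, hw, QMod.one_j]
      decide

/-- The homomorphism to the model. -/
def toQ (n : ℕ) : V8n n →* QMod n := PresentedGroup.toGroup (qGen_rels n)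

lemma toQ_a (n : ℕ) : toQ n (aV n) = QMod.qa n := by
  simp [toQ, aV, qGen]
lemma toQ_b (n : ℕ) : toQ n (bV n) = QMod.qb n := by
  simp [toQ, bV, qGen]

/-! ### Relations in the group -/

lemma a_pow (n : ℕ) : aV n ^ (2 * n) = 1 := by
  have := PresentedGroup.one_of_mem (rels := V8nRels n) (x := (FreeGroup.of 0) ^ (2 * n)) (by simp [V8nRels])
  simp only [map_pow] at this; exact this
lemma b_pow (n : ℕ) : bV n ^ 4 = 1 := by
  have := PresentedGroup.one_of_mem (rels := V8nRels n) (x := (FreeGroup.of 1) ^ 4) (by simp [V8nRels])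
  simp only [map_pow] at this; exact this
lemma ba_sq (n : ℕ) : bV n * aV n * (bV n * aV n) = 1 := by
  have := PresentedGroup.one_of_mem (rels := V8nRels n) (x := (FreeGroup.of 1 * FreeGroup.of 0) ^ 2) (by simp [V8nRels])
  simp only [map_pow, map_mul, map_inv, pow_two] at this; exact this
lemma bia_sq (n : ℕ) : (bV n)⁻¹ * aV n * ((bV n)⁻¹ * aV n) = 1 := by
  have := PresentedGroup.one_of_mem (rels := V8nRels n) (x := ((FreeGroup.of 1)⁻¹ * FreeGroup.of 0) ^ 2) (by simp [V8nRels])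
  simp only [map_pow, map_mul, map_inv, pow_two] at this; exact this

/-- A group-theoretic consequence of the relations: `b²` commutes with `a`. -/
lemma comm_of_rels {H : Type*} [Group H] {a b : H} (h1 : b * a * (b * a) = 1)
    (h2 : b⁻¹ * a * (b⁻¹ * a) = 1) (h4 : b ^ 4 = 1) : Commute (b ^ 2) a := by
  have e1 : b * a * b = a⁻¹ := by
    rw [eq_inv_iff_mul_eq_one]; simpa [mul_assoc] using h1
  have e2 : b⁻¹ * a * b⁻¹ = a⁻¹ := by
    rw [eq_inv_iff_mul_eq_one]; simpa [mul_assoc] using h2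
  have e3 : b ^ 2 * a * b ^ 2 = a := by
    calc b ^ 2 * a * b ^ 2 = b * (b * a * b) * b := by simp only [pow_two, mul_assoc]
      _ = b * (b⁻¹ * a * b⁻¹) * b := by rw [e1, e2]
      _ = a := by group
  have e4 : b ^ 2 * b ^ 2 = 1 := by rw [← pow_add]; exact h4
  calc b ^ 2 * a = b ^ 2 * a * (b ^ 2 * b ^ 2) := by rw [e4, mul_one]
    _ = (b ^ 2 * a * b ^ 2) * b ^ 2 := by group
    _ = a * b ^ 2 := by rw [e3]

lemma conj_of_rels {H : Type*} [Group H] {a b : H} (h1 : b * a * (b * a) = 1)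
    : b * a * b⁻¹ = a⁻¹ * (b ^ 2)⁻¹ := by
  have e1 : b * a * b = a⁻¹ := by
    rw [eq_inv_iff_mul_eq_one]; simpa [mul_assoc] using h1
  rw [← e1]; group

lemma conj_zpow_of_rels {H : Type*} [Group H] {a b : H} (h1 : b * a * (b * a) = 1)
    (h2 : b⁻¹ * a * (b⁻¹ * a) = 1) (h4 : b ^ 4 = 1) (k : ℤ) :
    b * a ^ k * b⁻¹ = a ^ (-k) * b ^ (-(2 * k)) := by
  have hc := comm_of_rels h1 h2 h4
  rw [← conj_zpow, conj_of_rels h1, (hc.inv_inv).symm.mul_zpow, inv_zpow', inv_zpow', ← zpow_natCast, ← zpow_mul]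
  congr 2; push_cast; ring

lemma z_comm_a (n : ℕ) : Commute (bV n ^ 2) (aV n) := comm_of_rels (ba_sq n) (bia_sq n) (b_pow n)

lemma closure_ab (n : ℕ) : Subgroup.closure {aV n, bV n} = ⊤ := by
  have := PresentedGroup.closure_range_of (V8nRels n)
  rw [← this]
  congr 1
  ext x
  simp [Fin.exists_fin_two, aV, bV, eq_comm]

lemma z_comm (n : ℕ) (x : V8n n) : Commute (bV n ^ 2) x := by
  have : x ∈ Subgroup.closure {aV n, bV n} := by rw [closure_ab]; trivial
  induction this using Subgroup.closure_induction with
  | mem x hx =>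
    rcases hx with rfl | rfl
    · exact z_comm_a n
    · exact (Commute.refl _).pow_left 2
  | one => exact Commute.one_right _
  | mul x y _ _ h1 h2 => exact h1.mul_right h2
  | inv x _ h => exact h.inv_right

lemma normal_form (n : ℕ) (x : V8n n) : ∃ i j : ℤ, x = aV n ^ i * bV n ^ j := by
  have : x ∈ Subgroup.closure {aV n, bV n} := by rw [closure_ab]; trivial
  have hb : ∀ i j : ℤ, bV n * (aV n ^ i * bV n ^ j) = aV n ^ (-i) * bV n ^ (-(2 * i) + 1 + j) := by
    intro i j
    rw [zpow_add, zpow_add, ← mul_assoc (aV n ^ (-i)), ← mul_assoc (aV n ^ (-i)),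
      ← conj_zpow_of_rels (ba_sq n) (bia_sq n) (b_pow n)]
    group
  induction this using Subgroup.closure_induction_left with
  | one => exact ⟨0, 0, by simp⟩
  | mul_left x hx y _ h =>
    obtain ⟨i, j, rfl⟩ := h
    rcases hx with rfl | rfl
    · exact ⟨1 + i, j, by rw [zpow_add, zpow_one, mul_assoc]⟩
    · exact ⟨_, _, hb i j⟩
  | inv_mul_cancel x hx y _ h =>
    obtain ⟨i, j, rfl⟩ := h
    rcases hx with rfl | rfl
    · exact ⟨-1 + i, j, by rw [zpow_add, zpow_neg_one, mul_assoc]⟩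
    · refine ⟨-i, j - 2 * i - 1, ?_⟩
      rw [inv_mul_eq_iff_eq_mul, hb]
      congr 2 <;> ring

lemma toQ_normal (n : ℕ) (i j : ℤ) : toQ n (aV n ^ i * bV n ^ j) = ⟨i, j⟩ := by
  rw [map_mul, map_zpow, map_zpow, toQ_a, toQ_b, QMod.qab]

lemma toQ_bij (n : ℕ) : Function.Bijective (toQ n) := by
  constructor
  · rw [injective_iff_map_eq_one]
    intro x hx
    obtain ⟨i, j, rfl⟩ := normal_form n x
    rw [toQ_normal] at hx
    have hi : (i : ZMod (2 * n)) = 0 := congrArg QMod.i hx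
    have hj : (j : ZMod 4) = 0 := congrArg QMod.j hx
    rw [ZMod.intCast_zmod_eq_zero_iff_dvd] at hi
    rw [ZMod.intCast_zmod_eq_zero_iff_dvd] at hj
    obtain ⟨i, rfl⟩ := hi
    obtain ⟨j, rfl⟩ := hj
    rw [zpow_mul, zpow_mul, zpow_natCast, zpow_natCast, a_pow, b_pow]; simp
  · rintro ⟨i, j⟩
    obtain ⟨i, rfl⟩ := ZMod.intCast_surjective i
    obtain ⟨j, rfl⟩ := ZMod.intCast_surjective j
    exact ⟨_, toQ_normal n i j⟩


/-! ### Counting -/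

/-- The `i`-components of the central elements of the abelian index-two subgroup. -/
abbrev KSet (n : ℕ) : Type := {i : ZMod (2 * n) // i + i = 0 ∧ wMap n i = 0}

/-- The equivalence of the group with its model. -/
noncomputable def eQ (n : ℕ) : V8n n ≃* QMod n := MulEquiv.ofBijective (toQ n) (toQ_bij n)

/-- The model as a product. -/
def qProd (n : ℕ) : QMod n ≃ ZMod (2 * n) × ZMod 4 where
  toFun q := (q.i, q.j)
  invFun q := ⟨q.1, q.2⟩
  left_inv _ := rfl
  right_inv _ := rfl

lemma card_V8n (n : ℕ) : Nat.card (V8n n) = 8 * n := by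
  rw [Nat.card_congr ((eQ n).toEquiv.trans (qProd n)), Nat.card_prod, Nat.card_zmod, Nat.card_zmod]
  ring

lemma card_K_odd (n : ℕ) (_hn : 0 < n) (h : Odd n) : Nat.card (KSet n) = 1 := by
  have : NeZero (2 * n) := ⟨by omega⟩
  rw [Nat.card_eq_one_iff_unique]
  refine ⟨⟨?_⟩, ⟨⟨0, by simp⟩⟩⟩
  have key : ∀ i : KSet n, i.1 = 0 := by
    rintro ⟨i, h1, h2⟩
    obtain ⟨i, rfl⟩ := ZMod.intCast_surjective i
    rw [wMap_intCast] at h2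
    have h2' : ((2 * i : ℤ) : ZMod 4) = 0 := by push_cast; exact h2
    rw [ZMod.intCast_zmod_eq_zero_iff_dvd] at h2'
    have h1' : ((i + i : ℤ) : ZMod (2 * n)) = 0 := by push_cast; exact h1
    rw [ZMod.intCast_zmod_eq_zero_iff_dvd] at h1'
    rw [ZMod.intCast_zmod_eq_zero_iff_dvd]
    push_cast at *
    have hni : (n : ℤ) ∣ i := by
      obtain ⟨c, hc⟩ := h1'
      exact ⟨c, by linarith⟩
    have h2i : (2 : ℤ) ∣ i := by omega
    refine IsCoprime.mul_dvd ?_ h2i hni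
    have := (Nat.coprime_two_left.mpr h)
    exact_mod_cast Nat.isCoprime_iff_coprime.mpr this
  intro x y
  exact Subtype.ext ((key x).trans (key y).symm)

lemma card_K_even (n : ℕ) (hn : 0 < n) (h : Even n) : Nat.card (KSet n) = 2 := by
  have : NeZero (2 * n) := ⟨by omega⟩
  rw [Nat.card_eq_two_iff]
  have hw : wMap n ((n : ℤ) : ZMod (2 * n)) = 0 := by
    rw [wMap_intCast]
    obtain ⟨m, rfl⟩ := h
    have : ((4 * m : ℤ) : ZMod 4) = 0 := by
      rw [ZMod.intCast_zmod_eq_zero_iff_dvd]; exact ⟨m, rfl⟩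
    rw [← this]; push_cast; ring
  have hnn : ((n : ℤ) : ZMod (2 * n)) + ((n : ℤ) : ZMod (2 * n)) = 0 := by
    rw [← Int.cast_add, ZMod.intCast_zmod_eq_zero_iff_dvd]
    exact ⟨1, by push_cast; ring⟩
  refine ⟨⟨0, by simp⟩, ⟨((n : ℤ) : ZMod (2 * n)), hnn, hw⟩, ?_, ?_⟩
  · intro h0
    have h0' : ((n : ℤ) : ZMod (2 * n)) = 0 := (congrArg Subtype.val h0).symm
    rw [ZMod.intCast_zmod_eq_zero_iff_dvd] at h0'
    have := Int.le_of_dvd (by omega) h0'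
    push_cast at this
    omega
  · rw [Set.eq_univ_iff_forall]
    rintro ⟨i, h1, h2⟩
    obtain ⟨i, rfl⟩ := ZMod.intCast_surjective i
    have h1' : ((i + i : ℤ) : ZMod (2 * n)) = 0 := by push_cast; exact h1
    rw [ZMod.intCast_zmod_eq_zero_iff_dvd] at h1'
    obtain ⟨c, hc⟩ := h1'
    push_cast at hc
    have hc' : i = n * c := by linarith
    rcases Int.even_or_odd' c with ⟨d, rfl | rfl⟩
    · left
      apply Subtype.ext
      change (i : ZMod (2 * n)) = 0
      rw [ZMod.intCast_zmod_eq_zero_iff_dvd]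
      exact ⟨d, by push_cast; rw [hc']; ring⟩
    · right
      apply Subtype.ext
      change (i : ZMod (2 * n)) = ((n : ℤ) : ZMod (2 * n))
      rw [ZMod.intCast_eq_intCast_iff_dvd_sub]
      exact ⟨-d, by push_cast; rw [hc']; ring⟩

lemma wMap_one (n : ℕ) : wMap n 1 = 2 := by simpa using wMap_intCast n 1

lemma fix_b_iff (n : ℕ) (q : QMod n) :
    QMod.qb n * q = q * QMod.qb n ↔ (q.i + q.i = 0 ∧ wMap n q.i = 0) := by
  have h1 : sgn4 1 = -1 := by decide
  rw [QMod.ext_iff]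
  simp only [QMod.mul_i, QMod.mul_j, QMod.qb, h1, smul_zero, map_zero, mul_zero, add_zero, zero_add, neg_smul, one_smul, one_mul]
  rw [neg_eq_iff_add_eq_zero]
  refine and_congr Iff.rfl ⟨fun h => ?_, fun h => ?_⟩
  · linear_combination h
  · linear_combination h

/-- Shift used to describe the centralizer of `ab`. -/
def dlt (n : ℕ) (j : ZMod 4) : ZMod (2 * n) := if sgn4 j = 1 then 0 else 1

lemma fix_t_iff (n : ℕ) (q : QMod n) :
    QMod.qa n * QMod.qb n * q = q * (QMod.qa n * QMod.qb n) ↔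
      ((q.i - dlt n q.j) + (q.i - dlt n q.j) = 0 ∧ wMap n (q.i - dlt n q.j) = 0) := by
  have h1 : sgn4 1 = -1 := by decide
  have ht : QMod.qa n * QMod.qb n = ⟨1, 1⟩ := by simpa using QMod.qab n 1 1
  rw [ht, QMod.ext_iff]
  simp only [QMod.mul_i, QMod.mul_j, h1, neg_smul, one_smul, one_mul, map_sub, wMap_one]
  obtain ⟨i, j⟩ := q
  have e0 : sgn4 0 = 1 := by decide
  have e2 : sgn4 2 = 1 := by decide
  have e3 : sgn4 3 = -1 := by decide
  have e4 : (4 : ZMod 4) = 0 := by decide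
  have hj : j = 0 ∨ j = 1 ∨ j = 2 ∨ j = 3 := by revert j; decide
  have hw := two_wMap n i
  rcases hj with rfl | rfl | rfl | rfl
  all_goals
    simp only [dlt, e0, h1, e2, e3, if_true, wMap_one, map_zero, one_smul, neg_smul, sub_zero,
      show ((-1 : ℤ) = 1) = False by simp, if_false]
    refine and_congr ⟨fun h => ?_, fun h => ?_⟩ ⟨fun h => ?_, fun h => ?_⟩
  all_goals first
    | linear_combination h
    | linear_combination -h
    | linear_combination h + e4
    | linear_combination h - e4

lemma card_fix_b (n : ℕ) :
    Nat.card {x : V8n n // bV n * x = x * bV n} = 4 * Nat.card (KSet n) := by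
  have e1 : {x : V8n n // bV n * x = x * bV n} ≃ {q : QMod n // q.i + q.i = 0 ∧ wMap n q.i = 0} :=
    (eQ n).toEquiv.subtypeEquiv (fun x => by
      rw [← fix_b_iff, ← toQ_b]
      change _ ↔ toQ n (bV n) * toQ n x = toQ n x * toQ n (bV n)
      rw [← map_mul, ← map_mul, (toQ_bij n).1.eq_iff])
  have e2 : {q : QMod n // q.i + q.i = 0 ∧ wMap n q.i = 0} ≃ ZMod 4 × KSet n :=
    { toFun := fun q => (q.1.j, ⟨q.1.i, q.2⟩)
      invFun := fun q => ⟨⟨q.2.1, q.1⟩, q.2.2⟩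
      left_inv := fun _ => rfl
      right_inv := fun _ => rfl }
  rw [Nat.card_congr (e1.trans e2), Nat.card_prod, Nat.card_zmod]

lemma card_fix_t (n : ℕ) :
    Nat.card {x : V8n n // aV n * bV n * x = x * (aV n * bV n)} = 4 * Nat.card (KSet n) := by
  have e1 : {x : V8n n // aV n * bV n * x = x * (aV n * bV n)} ≃
      {q : QMod n // (q.i - dlt n q.j) + (q.i - dlt n q.j) = 0 ∧ wMap n (q.i - dlt n q.j) = 0} :=
    (eQ n).toEquiv.subtypeEquiv (fun x => by
      rw [← fix_t_iff, ← toQ_b, ← toQ_a, ← map_mul]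
      change _ ↔ toQ n (aV n * bV n) * toQ n x = toQ n x * toQ n (aV n * bV n)
      rw [← map_mul, ← map_mul, (toQ_bij n).1.eq_iff])
  have e2 : {q : QMod n // (q.i - dlt n q.j) + (q.i - dlt n q.j) = 0 ∧ wMap n (q.i - dlt n q.j) = 0}
      ≃ ZMod 4 × KSet n :=
    { toFun := fun q => (q.1.j, ⟨q.1.i - dlt n q.1.j, q.2⟩)
      invFun := fun q => ⟨⟨q.2.1 + dlt n q.1, q.1⟩, by simpa using q.2.2⟩
      left_inv := fun q => by ext <;> simp
      right_inv := fun q => by ext <;> simp }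
  rw [Nat.card_congr (e1.trans e2), Nat.card_prod, Nat.card_zmod]


/-! ### Anticommutants -/

/-- The elements of the group algebra anticommuting with `g`. -/
def anti (F : Type*) [Field F] {G : Type*} [Group G] (g : G) : Submodule F (MonoidAlgebra F G) where
  carrier := {m | MonoidAlgebra.single g 1 * m + m * MonoidAlgebra.single g 1 = 0}
  zero_mem' := by simp
  add_mem' := by
    intro x y hx hy
    simp only [Set.mem_ofPred_eq] at *
    rw [mul_add, add_mul, add_add_add_comm, hx, hy, add_zero]
  smul_mem' := by
    intro c x hx
    simp only [Set.mem_ofPred_eq] at *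
    rw [mul_smul_comm, smul_mul_assoc, ← smul_add, hx, smul_zero]

lemma mem_anti {F : Type*} [Field F] {G : Type*} [Group G] {g : G} {m : MonoidAlgebra F G} :
    m ∈ anti F g ↔ MonoidAlgebra.single g 1 * m + m * MonoidAlgebra.single g 1 = 0 := Iff.rfl

lemma mem_anti_iff {F : Type*} [Field F] {G : Type*} [Group G] {g : G} {m : MonoidAlgebra F G} :
    m ∈ anti F g ↔ ∀ x, m.coeff (g * x * g⁻¹) = - m.coeff x := by
  rw [mem_anti, ← MonoidAlgebra.coeff_inj]
  constructor
  · intro h x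
    have := DFunLike.congr_fun h (g * x)
    simp only [MonoidAlgebra.coeff_add, Finsupp.add_apply, MonoidAlgebra.coeff_single_mul_apply,
      MonoidAlgebra.coeff_mul_single_apply, one_mul, mul_one, inv_mul_cancel_left,
      MonoidAlgebra.coeff_zero, Finsupp.zero_apply] at this
    linear_combination this
  · intro h
    ext y
    have := h (g⁻¹ * y)
    rw [mul_inv_cancel_left] at this
    simp only [MonoidAlgebra.coeff_add, Finsupp.add_apply, MonoidAlgebra.coeff_single_mul_apply,
      MonoidAlgebra.coeff_mul_single_apply, one_mul, mul_one, this,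
      MonoidAlgebra.coeff_zero, Finsupp.zero_apply]
    ring

lemma finrank_anti (F : Type*) [Field F] (h2 : (2 : F) ≠ 0) {G : Type*} [Group G] [Finite G] (g : G)
    (hg : ∀ x, Commute (g ^ 2) x) :
    2 * Module.finrank F (anti F g) + Nat.card {x : G // g * x = x * g} = Nat.card G := by
  classical
  have := Fintype.ofFinite G
  let _ : LinearOrder G := LinearOrder.lift' (Fintype.equivFin G) (Fintype.equivFin G).injective
  let σ : G → G := fun x => g * x * g⁻¹
  have hσ : ∀ x, σ (σ x) = x := by
    intro x
    have h := (hg x).eq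
    calc g * (g * x * g⁻¹) * g⁻¹ = g ^ 2 * x * (g ^ 2)⁻¹ := by
          simp only [pow_two, mul_inv_rev, mul_assoc]
      _ = x := by rw [h, mul_inv_cancel_right]
  let S : Finset G := Finset.univ.filter (fun x => x < σ x)
  let T : Finset G := Finset.univ.filter (fun x => σ x < x)
  let U : Finset G := Finset.univ.filter (fun x => g * x = x * g)
  have hfix : ∀ x, g * x = x * g ↔ σ x = x := fun x => by
    simp only [σ]; rw [mul_inv_eq_iff_eq_mul]
  have hST : S.card = T.card := by
    apply Finset.card_bij (fun x _ => σ x)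
    · intro x hx
      simp only [S, T, Finset.mem_filter, Finset.mem_univ, true_and] at *
      rwa [hσ]
    · intro x _ y _ h
      rw [← hσ x, h, hσ]
    · intro y hy
      refine ⟨σ y, ?_, hσ y⟩
      simp only [S, T, Finset.mem_filter, Finset.mem_univ, true_and] at *
      rwa [hσ]
  have hcard : Fintype.card G = S.card + T.card + U.card := by
    rw [← Finset.card_univ, ← Finset.card_union_of_disjoint, ← Finset.card_union_of_disjoint]
    · congr 1
      ext x
      simp only [S, T, U, Finset.mem_univ, Finset.mem_union, Finset.mem_filter, true_and, true_iff, hfix]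
      rcases lt_trichotomy x (σ x) with h | h | h
      · exact Or.inl (Or.inl h)
      · exact Or.inr h.symm
      · exact Or.inl (Or.inr h)
    · rw [Finset.disjoint_left]
      intro x hx hx'
      simp only [S, T, U, Finset.mem_union, Finset.mem_filter, Finset.mem_univ, true_and, hfix] at hx hx'
      rw [hx'] at hx
      simp at hx
    · rw [Finset.disjoint_left]
      intro x hx hx'
      simp only [S, T, Finset.mem_filter, Finset.mem_univ, true_and] at hx hx'
      exact lt_asymm hx hx'
  let r : anti F g →ₗ[F] (S → F) :=
    { toFun := fun m x => m.1.coeff x.1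
      map_add' := fun _ _ => rfl
      map_smul' := fun _ _ => rfl }
  have hr : Function.Bijective r := by
    constructor
    · rw [injective_iff_map_eq_zero]
      rintro ⟨m, hm⟩ h
      rw [mem_anti_iff] at hm
      have hS : ∀ x, x < σ x → m.coeff x = 0 := fun x hx =>
        congrFun h (⟨x, by simpa [S] using hx⟩ : S)
      apply Subtype.ext
      apply MonoidAlgebra.coeff_injective
      ext x
      change m.coeff x = 0
      have hmx : m.coeff (σ x) = - m.coeff x := hm x
      rcases lt_trichotomy x (σ x) with h | h | h
      · exact hS x h
      · rw [← h] at hmx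
        have : 2 * m.coeff x = 0 := by linear_combination hmx
        exact (mul_eq_zero.mp this).resolve_left h2
      · have := hS (σ x) (by rwa [hσ])
        rw [this] at hmx
        linear_combination hmx
    · intro f
      let k : G → F := fun x => if h : x < σ x then f ⟨x, by simpa [S] using h⟩ else
        if h : σ x < x then - f ⟨σ x, by simpa [S, hσ] using h⟩ else 0
      refine ⟨⟨MonoidAlgebra.ofCoeff (Finsupp.equivFunOnFinite.symm k), ?_⟩, ?_⟩
      · rw [mem_anti_iff]
        intro x
        change k (σ x) = - k x
        simp only [k, hσ]
        rcases lt_trichotomy x (σ x) with h | h | h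
        · rw [dif_neg (not_lt.mpr h.le), dif_pos h, dif_pos h]
        · rw [dif_neg h.not_gt, dif_neg h.not_lt, dif_neg h.not_gt, dif_neg h.not_lt, neg_zero]
        · rw [dif_pos h, dif_pos h, dif_neg (not_lt.mpr h.le), neg_neg]
      · funext x
        change k x.1 = f x
        have hx : x.1 < σ x.1 := (Finset.mem_filter.mp x.2).2
        simp only [k]
        rw [dif_pos hx]
  have h1 : Module.finrank F (anti F g) = S.card := by
    rw [(LinearEquiv.ofBijective r hr).finrank_eq, Module.finrank_fintype_fun_eq_card, Fintype.card_coe]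
  have h3 : Nat.card {x : G // g * x = x * g} = U.card := by
    rw [Nat.card_eq_fintype_card, Fintype.card_subtype]
  rw [h1, h3, Nat.card_eq_fintype_card, hcard]
  omega

/-! ### The extension group controlling derivations -/

/-- Pairs (element of the group algebra, group element): the semidirect product for conjugation. -/
@[ext] structure Ext1 (F : Type*) [Field F] (G : Type*) [Group G] where
  m : MonoidAlgebra F G
  g : G

namespace Ext1
variable {F : Type*} [Field F] {G : Type*} [Group G]

/-- Conjugation on the group algebra. -/
noncomputable def cj (g : G) (m : MonoidAlgebra F G) : MonoidAlgebra F G :=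
  MonoidAlgebra.single g 1 * m * MonoidAlgebra.single g⁻¹ 1

lemma cj_add (g : G) (m m' : MonoidAlgebra F G) : cj g (m + m') = cj g m + cj g m' := by
  simp [cj, mul_add, add_mul]
lemma cj_neg (g : G) (m : MonoidAlgebra F G) : cj g (-m) = - cj g m := by
  simp [cj]
lemma cj_zero (g : G) : cj g (0 : MonoidAlgebra F G) = 0 := by
  simp [cj]
lemma cj_mul (g h : G) (m : MonoidAlgebra F G) : cj (g * h) m = cj g (cj h m) := by
  simp only [cj]
  rw [mul_inv_rev, ← one_mul (1 : F), ← MonoidAlgebra.single_mul_single, ← MonoidAlgebra.single_mul_single]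
  simp only [mul_assoc, one_mul]
lemma cj_one (m : MonoidAlgebra F G) : cj 1 m = m := by
  simp [cj, ← MonoidAlgebra.one_def]
lemma cj_coeff (g : G) (m : MonoidAlgebra F G) (x : G) : (cj g m).coeff x = m.coeff (g⁻¹ * x * g) := by
  simp [cj, mul_assoc]

noncomputable instance : Mul (Ext1 F G) := ⟨fun x y => ⟨x.m + cj x.g y.m, x.g * y.g⟩⟩
noncomputable instance : One (Ext1 F G) := ⟨⟨0, 1⟩⟩
noncomputable instance : Inv (Ext1 F G) := ⟨fun x => ⟨- cj x.g⁻¹ x.m, x.g⁻¹⟩⟩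

lemma mul_m (x y : Ext1 F G) : (x * y).m = x.m + cj x.g y.m := rfl
lemma mul_g (x y : Ext1 F G) : (x * y).g = x.g * y.g := rfl
lemma one_m : (1 : Ext1 F G).m = 0 := rfl
lemma one_g : (1 : Ext1 F G).g = 1 := rfl
lemma inv_m (x : Ext1 F G) : (x⁻¹).m = - cj x.g⁻¹ x.m := rfl
lemma inv_g (x : Ext1 F G) : (x⁻¹).g = x.g⁻¹ := rfl

noncomputable instance : Group (Ext1 F G) := Group.ofLeftAxioms
  (by intro x y z; ext1 <;> simp only [mul_m, mul_g, cj_add, cj_mul, mul_assoc, add_assoc])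
  (by intro x; ext1 <;> simp only [mul_m, mul_g, one_m, one_g, cj_one, zero_add, one_mul])
  (by intro x; ext1 <;> simp only [mul_m, mul_g, inv_m, inv_g, one_m, one_g, neg_add_cancel, inv_mul_cancel])

/-- The projection to the group. -/
noncomputable def proj : Ext1 F G →* G where
  toFun := Ext1.g
  map_one' := rfl
  map_mul' _ _ := rfl

lemma pow_g (x : Ext1 F G) (k : ℕ) : (x ^ k).g = x.g ^ k := map_pow proj x k

lemma pow_coeff (x : Ext1 F G) (k : ℕ) (y : G) (hy : Commute x.g y) :
    (x ^ k).m.coeff y = k * x.m.coeff y := by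
  induction k with
  | zero => simp [one_m]
  | succ k ih =>
    rw [pow_succ, mul_m, MonoidAlgebra.coeff_add, Finsupp.add_apply, ih, cj_coeff, pow_g]
    have : (x.g ^ k)⁻¹ * y * x.g ^ k = y := by
      rw [mul_assoc, ← (hy.pow_left k).eq, inv_mul_cancel_left]
    rw [this]; push_cast; ring

end Ext1

lemma anti_cj {F : Type*} [Field F] {G : Type*} [Group G] {g : G} {m : MonoidAlgebra F G}
    (h : m ∈ anti F g) : Ext1.cj g (m * MonoidAlgebra.single g⁻¹ 1) = -(m * MonoidAlgebra.single g⁻¹ 1) := by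
  rw [mem_anti, add_eq_zero_iff_eq_neg] at h
  simp only [Ext1.cj]
  rw [← mul_assoc, h]
  simp [mul_assoc, MonoidAlgebra.single_mul_single, ← MonoidAlgebra.one_def]


/-! ### Lifting the generators to the extension -/

lemma t_sq (n : ℕ) : aV n * bV n * (aV n * bV n) = 1 := by
  have h := ba_sq n
  calc aV n * bV n * (aV n * bV n) = (bV n)⁻¹ * (bV n * aV n * (bV n * aV n)) * bV n := by group
    _ = 1 := by rw [h]; group

lemma t_sq_comm (n : ℕ) (x : V8n n) : Commute ((aV n * bV n) ^ 2) x := by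
  rw [pow_two, t_sq]; exact Commute.one_left x

open Ext1 in
lemma cj_central {F : Type*} [Field F] {G : Type*} [Group G] {z : G} (hz : ∀ x, Commute z x)
    (m : MonoidAlgebra F G) : cj z m = m := by
  apply MonoidAlgebra.coeff_injective
  ext x
  rw [cj_coeff, mul_assoc, ← (hz x).eq, inv_mul_cancel_left]

open Ext1 in
lemma cj_of_commute {F : Type*} [Field F] {G : Type*} [Group G] {X P : Ext1 F G} (hP : P.g = 1)
    (h : X * P = P * X) : cj X.g P.m = P.m := by
  have := congrArg Ext1.m h
  rw [mul_m, mul_m, hP, cj_one, add_comm] at this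
  exact add_right_cancel this

open Ext1 in
lemma exists_lift (n : ℕ) (F : Type*) [Field F] (h2 : (2 : F) ≠ 0) (hnF : (n : F) = 0)
    (β τ : MonoidAlgebra F (V8n n)) (hβ : β ∈ anti F (bV n)) (hτ : τ ∈ anti F (aV n * bV n)) :
    ∃ c : V8n n →* Ext1 F (V8n n), (∀ x, (c x).g = x) ∧
      (c (bV n)).m = β * MonoidAlgebra.single (bV n)⁻¹ 1 ∧
      (c (aV n * bV n)).m = τ * MonoidAlgebra.single (aV n * bV n)⁻¹ 1 := by
  obtain ⟨B, hB⟩ : ∃ B : Ext1 F (V8n n), B = ⟨β * MonoidAlgebra.single (bV n)⁻¹ 1, bV n⟩ := ⟨_, rfl⟩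
  obtain ⟨T, hT⟩ : ∃ T : Ext1 F (V8n n),
    T = ⟨τ * MonoidAlgebra.single (aV n * bV n)⁻¹ 1, aV n * bV n⟩ := ⟨_, rfl⟩
  have hBg : B.g = bV n := by rw [hB]
  have hTg : T.g = aV n * bV n := by rw [hT]
  have hBB : B ^ 2 = ⟨0, bV n ^ 2⟩ := by
    rw [pow_two]
    ext1
    · rw [mul_m, hBg]
      simp only [hB]
      rw [anti_cj hβ, add_neg_cancel]
    · rw [mul_g, hBg, pow_two]
  have hTT : T * T = 1 := by
    ext1
    · rw [mul_m, hTg]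
      simp only [hT]
      rw [anti_cj hτ, add_neg_cancel, one_m]
    · rw [mul_g, hTg, t_sq, one_g]
  have hZ : ∀ X : Ext1 F (V8n n), Commute (B ^ 2) X := by
    intro X
    rw [hBB]
    change _ * _ = _ * _
    ext1
    · rw [mul_m, mul_m, cj_zero, cj_central (z_comm n)]; simp
    · rw [mul_g, mul_g]; exact (z_comm n X.g).eq
  have hB4 : B ^ 4 = 1 := by
    rw [show 4 = 2 + 2 from rfl, pow_add, hBB]
    ext1
    · rw [mul_m, cj_zero, one_m, add_zero]
    · rw [mul_g, one_g, ← pow_add]; exact b_pow n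
  obtain ⟨R, hR⟩ : ∃ R : Ext1 F (V8n n), R = T * B⁻¹ := ⟨_, rfl⟩
  have hRg : R.g = aV n := by rw [hR, mul_g, inv_g, hTg, hBg, mul_inv_cancel_right]
  have r1 : B * R * (B * R) = 1 := by
    calc B * R * (B * R) = B * (T * T) * B⁻¹ := by rw [hR]; group
      _ = 1 := by rw [hTT]; group
  have r2 : B⁻¹ * R * (B⁻¹ * R) = 1 := by
    have hc : (B ^ 2)⁻¹ * T = T * (B ^ 2)⁻¹ := (hZ T).inv_left.eq
    calc B⁻¹ * R * (B⁻¹ * R) = B⁻¹ * T * ((B ^ 2)⁻¹ * T) * B⁻¹ := by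
          rw [hR]; simp only [pow_two, mul_inv_rev, mul_assoc]
      _ = B⁻¹ * (T * T) * (B ^ 2)⁻¹ * B⁻¹ := by rw [hc]; simp only [mul_assoc]
      _ = (B ^ 4)⁻¹ := by rw [hTT]; group
      _ = 1 := by rw [hB4, inv_one]
  have r3 : R ^ (2 * n) = 1 := by
    obtain ⟨P, hP⟩ : ∃ P, P = R ^ (2 * n) := ⟨_, rfl⟩
    have hPg : P.g = 1 := by rw [hP, pow_g, hRg, a_pow]
    have hconj : B * P * B⁻¹ = P⁻¹ := by
      have := conj_zpow_of_rels r1 r2 hB4 ((2 * n : ℕ) : ℤ)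
      rw [zpow_natCast, ← hP, zpow_neg, zpow_natCast, ← hP,
        show -(2 * ((2 * n : ℕ) : ℤ)) = (4 : ℕ) * (-(n : ℤ)) by push_cast; ring, zpow_mul, zpow_natCast,
        hB4, one_zpow, mul_one] at this
      exact this
    have hbs : cj (bV n) P.m = - P.m := by
      have := congrArg Ext1.m (mul_inv_eq_iff_eq_mul.mp hconj)
      rw [mul_m, mul_m, inv_m, inv_g, hPg, inv_one, cj_one, cj_one, hBg, add_comm] at this
      exact add_right_cancel this
    have has : ∀ k : ℤ, cj (aV n ^ k) P.m = P.m := by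
      intro k
      have h := cj_of_commute (X := R ^ k) (P := P) hPg (by
        rw [hP, ← zpow_natCast, ← zpow_add, ← zpow_add, add_comm])
      have hg : (R ^ k).g = aV n ^ k := by rw [← hRg]; exact map_zpow proj R k
      rwa [hg] at h
    rw [← hP]
    ext1
    · rw [one_m]
      apply MonoidAlgebra.coeff_injective
      ext y
      rw [MonoidAlgebra.coeff_zero, Finsupp.zero_apply]
      obtain ⟨i, j, rfl⟩ := normal_form n y
      have hzl : ∀ (l : ℤ) (x : V8n n), Commute (bV n ^ (2 * l)) x := by
        intro l x
        have := (z_comm n x).zpow_left l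
        rwa [← zpow_natCast, ← zpow_mul] at this
      rcases Int.even_or_odd' j with ⟨l, rfl | rfl⟩
      · rw [hP, pow_coeff]
        · push_cast; rw [hnF]; ring
        · rw [hRg]
          exact ((Commute.refl _).zpow_right i).mul_right (hzl l _).symm
      · obtain ⟨y, hy⟩ : ∃ y, y = aV n ^ i * bV n ^ (2 * l + 1) := ⟨_, rfl⟩
        have e1 : bV n * y * (bV n)⁻¹ = (aV n ^ i)⁻¹ * y * aV n ^ i := by
          have hl := fun x => (hzl l x).eq
          calc bV n * y * (bV n)⁻¹ = bV n * aV n ^ i * (bV n)⁻¹ * bV n ^ (2 * l) * bV n := by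
                rw [hy, zpow_add, zpow_one]; 
                have := hl (bV n)
                rw [this]; group
            _ = bV n ^ (2 * l) * (bV n * aV n ^ i * (bV n)⁻¹) * bV n := by rw [hl]
            _ = (aV n ^ i)⁻¹ * y * aV n ^ i := by
                rw [hy, zpow_add, zpow_one]; simp only [mul_assoc, inv_mul_cancel_left, inv_mul_cancel, mul_one]
        rw [← hy]
        have e2 := congrArg (fun m => m.coeff (bV n * y * (bV n)⁻¹)) hbs
        have e3 := congrArg (fun m => m.coeff y) (has i)
        simp only [cj_coeff] at e2 e3
        rw [← e1] at e3
        rw [show (bV n)⁻¹ * (bV n * y * (bV n)⁻¹) * bV n = y by group] at e2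
        rw [MonoidAlgebra.coeff_neg, Finsupp.neg_apply, e3] at e2
        have : 2 * P.m.coeff y = 0 := by linear_combination e2
        exact (mul_eq_zero.mp this).resolve_left h2
    · rw [hPg, one_g]
  have hrel : ∀ r ∈ V8nRels n, FreeGroup.lift (![R, B] : Fin 2 → Ext1 F (V8n n)) r = 1 := by
    intro r hr
    rcases hr with rfl | rfl | rfl | rfl
    · simpa using r3
    · simpa using hB4
    · simpa [pow_two] using r1
    · simpa [pow_two] using r2
  refine ⟨PresentedGroup.toGroup hrel, ?_, ?_, ?_⟩
  · have : (proj (F := F) (G := V8n n)).comp (PresentedGroup.toGroup hrel) = MonoidHom.id _ := by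
      apply PresentedGroup.ext
      intro x
      fin_cases x
      · simpa [proj, aV] using hRg
      · simpa [proj, bV] using hBg
    intro x
    exact DFunLike.congr_fun this x
  · have : PresentedGroup.toGroup hrel (bV n) = B := by simp [bV]
    rw [this, hB]
  · have : PresentedGroup.toGroup hrel (aV n * bV n) = T := by
      rw [map_mul]
      simp [aV, bV, hR]
    rw [this, hT]

/-! ### Derivations -/

/-- The linear map attached to a section of the extension. -/
noncomputable def derOf {F : Type*} [Field F] {G : Type*} [Group G] (c : G →* Ext1 F G) :
    MonoidAlgebra F G →ₗ[F] MonoidAlgebra F G :=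
  (Finsupp.linearCombination F (fun g => (c g).m * MonoidAlgebra.single g 1)).comp
    (MonoidAlgebra.coeffLinearEquiv F).toLinearMap

lemma derOf_single {F : Type*} [Field F] {G : Type*} [Group G] (c : G →* Ext1 F G) (g : G) (r : F) :
    derOf c (MonoidAlgebra.single g r) = r • ((c g).m * MonoidAlgebra.single g 1) := by
  simp only [derOf, LinearMap.comp_apply]
  exact Finsupp.linearCombination_single F r g

lemma leibniz_of_single {F : Type*} [Field F] {G : Type*} [Group G]
    (d : MonoidAlgebra F G →ₗ[F] MonoidAlgebra F G)
    (h : ∀ g k : G, d (MonoidAlgebra.single g 1 * MonoidAlgebra.single k 1) =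
      d (MonoidAlgebra.single g 1) * MonoidAlgebra.single k 1 +
      MonoidAlgebra.single g 1 * d (MonoidAlgebra.single k 1)) :
    d ∈ fDerivations F (MonoidAlgebra F G) := by
  intro x y
  have hs : ∀ (g : G) (r : F), MonoidAlgebra.single g r = r • MonoidAlgebra.single g (1 : F) := by
    intro g r; rw [MonoidAlgebra.smul_single, smul_eq_mul, mul_one]
  induction x using MonoidAlgebra.induction_linear with
  | zero => simp
  | add x x' hx hx' => simp only [add_mul, map_add, hx, hx']; abel
  | single g r =>
    induction y using MonoidAlgebra.induction_linear with
    | zero => simp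
    | add y y' hy hy' => simp only [mul_add, map_add, hy, hy']; abel
    | single k q =>
      rw [hs g r, hs k q]
      simp only [smul_mul_assoc, mul_smul_comm, map_smul, h, smul_add]

lemma derOf_mem {F : Type*} [Field F] {G : Type*} [Group G] (c : G →* Ext1 F G)
    (hc : ∀ x, (c x).g = x) : derOf c ∈ fDerivations F (MonoidAlgebra F G) := by
  apply leibniz_of_single
  intro g k
  rw [MonoidAlgebra.single_mul_single, one_mul, derOf_single, derOf_single, derOf_single, one_smul,
    one_smul, one_smul, map_mul, Ext1.mul_m, hc, add_mul]
  simp only [Ext1.cj, mul_assoc, MonoidAlgebra.single_mul_single, one_mul, inv_mul_cancel_left]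

lemma der_one {F : Type*} [Field F] {A : Type*} [Ring A] [Algebra F A] {d : A →ₗ[F] A}
    (hd : d ∈ fDerivations F A) : d 1 = 0 := by
  have := hd 1 1
  simpa using this

lemma der_b_mem (n : ℕ) (F : Type*) [Field F] (h2 : (2 : F) ≠ 0)
    {d : MonoidAlgebra F (V8n n) →ₗ[F] MonoidAlgebra F (V8n n)}
    (hd : d ∈ fDerivations F (MonoidAlgebra F (V8n n))) :
    d (MonoidAlgebra.single (bV n) 1) ∈ anti F (bV n) := by
  have hbb := hd (MonoidAlgebra.single (bV n) 1) (MonoidAlgebra.single (bV n) 1)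
  have hzz := hd (MonoidAlgebra.single (bV n ^ 2) 1) (MonoidAlgebra.single (bV n ^ 2) 1)
  rw [MonoidAlgebra.single_mul_single, one_mul, ← pow_two] at hbb
  rw [MonoidAlgebra.single_mul_single, one_mul, ← pow_add, b_pow, ← MonoidAlgebra.one_def, der_one hd] at hzz
  have hcomm := MonoidAlgebra.of_commute (R := F) (fun m => z_comm n m) (d (MonoidAlgebra.single (bV n ^ 2) 1))
  rw [MonoidAlgebra.of_apply] at hcomm
  rw [← hcomm.eq, ← two_smul F, eq_comm, smul_eq_zero] at hzz
  have hz := hzz.resolve_left h2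
  have h0 : d (MonoidAlgebra.single (bV n ^ 2) 1) = 0 := by
    have := congrArg (fun m => MonoidAlgebra.single (bV n ^ 2)⁻¹ (1 : F) * m) hz
    simpa [← mul_assoc, MonoidAlgebra.single_mul_single, ← MonoidAlgebra.one_def] using this
  rw [mem_anti, add_comm, ← hbb, h0]

lemma der_t_mem (n : ℕ) (F : Type*) [Field F]
    {d : MonoidAlgebra F (V8n n) →ₗ[F] MonoidAlgebra F (V8n n)}
    (hd : d ∈ fDerivations F (MonoidAlgebra F (V8n n))) :
    d (MonoidAlgebra.single (aV n * bV n) 1) ∈ anti F (aV n * bV n) := by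
  have htt := hd (MonoidAlgebra.single (aV n * bV n) 1) (MonoidAlgebra.single (aV n * bV n) 1)
  rw [MonoidAlgebra.single_mul_single, one_mul, t_sq, ← MonoidAlgebra.one_def, der_one hd] at htt
  rw [mem_anti, add_comm, ← htt]

lemma der_eq_zero (n : ℕ) (F : Type*) [Field F]
    {d : MonoidAlgebra F (V8n n) →ₗ[F] MonoidAlgebra F (V8n n)}
    (hd : d ∈ fDerivations F (MonoidAlgebra F (V8n n)))
    (hb : d (MonoidAlgebra.single (bV n) 1) = 0)
    (ht : d (MonoidAlgebra.single (aV n * bV n) 1) = 0) : d = 0 := by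
  have hmul : ∀ x y : V8n n, d (MonoidAlgebra.single x 1) = 0 → d (MonoidAlgebra.single y 1) = 0 →
      d (MonoidAlgebra.single (x * y) 1) = 0 := by
    intro x y hx hy
    have := hd (MonoidAlgebra.single x 1) (MonoidAlgebra.single y 1)
    rwa [MonoidAlgebra.single_mul_single, one_mul, hx, hy, zero_mul, mul_zero, add_zero] at this
  have hinv : ∀ x : V8n n, d (MonoidAlgebra.single x 1) = 0 → d (MonoidAlgebra.single x⁻¹ 1) = 0 := by
    intro x hx
    have := hd (MonoidAlgebra.single x 1) (MonoidAlgebra.single x⁻¹ 1)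
    rw [MonoidAlgebra.single_mul_single, one_mul, mul_inv_cancel, ← MonoidAlgebra.one_def, der_one hd, hx, zero_mul,
      zero_add] at this
    have := congrArg (fun m => MonoidAlgebra.single x⁻¹ (1 : F) * m) this.symm
    simpa [← mul_assoc, MonoidAlgebra.single_mul_single, ← MonoidAlgebra.one_def] using this
  have ha : d (MonoidAlgebra.single (aV n) 1) = 0 := by
    have := hmul _ _ ht (hinv _ hb)
    rwa [mul_inv_cancel_right] at this
  have hall : ∀ x : V8n n, d (MonoidAlgebra.single x 1) = 0 := by
    intro x
    have : x ∈ Subgroup.closure {aV n, bV n} := by rw [closure_ab]; trivial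
    induction this using Subgroup.closure_induction with
    | mem x hx =>
      rcases hx with rfl | rfl
      · exact ha
      · exact hb
    | one => rw [← MonoidAlgebra.one_def]; exact der_one hd
    | mul x y _ _ h1 h2 => exact hmul x y h1 h2
    | inv x _ h => exact hinv x h
  apply LinearMap.ext
  intro x
  rw [LinearMap.zero_apply]
  induction x using MonoidAlgebra.induction_linear with
  | zero => simp
  | add x y hx hy => rw [map_add, hx, hy, add_zero]
  | single g r =>
    have : MonoidAlgebra.single g r = r • MonoidAlgebra.single g (1 : F) := by
      rw [MonoidAlgebra.smul_single, smul_eq_mul, mul_one]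
    rw [this, map_smul, hall, smul_zero]

/-- Evaluation of derivations at the generators `b` and `ab`. -/
noncomputable def evalGens (n : ℕ) (F : Type*) [Field F] (h2 : (2 : F) ≠ 0) :
    fDerivations F (MonoidAlgebra F (V8n n)) →ₗ[F] anti F (bV n) × anti F (aV n * bV n) where
  toFun d := (⟨d.1 (MonoidAlgebra.single (bV n) 1), der_b_mem n F h2 d.2⟩,
    ⟨d.1 (MonoidAlgebra.single (aV n * bV n) 1), der_t_mem n F d.2⟩)
  map_add' _ _ := rfl
  map_smul' _ _ := rfl

lemma evalGens_bij (n : ℕ) (F : Type*) [Field F] (h2 : (2 : F) ≠ 0) (hnF : (n : F) = 0) :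
    Function.Bijective (evalGens n F h2) := by
  constructor
  · rw [injective_iff_map_eq_zero]
    rintro ⟨d, hd⟩ h
    have h1 := congrArg (fun q => q.1.1) h
    have h3 := congrArg (fun q => q.2.1) h
    exact Subtype.ext (der_eq_zero n F hd h1 h3)
  · rintro ⟨⟨β, hβ⟩, ⟨τ, hτ⟩⟩
    obtain ⟨c, hc, hcb, hct⟩ := exists_lift n F h2 hnF β τ hβ hτ
    refine ⟨⟨derOf c, derOf_mem c hc⟩, ?_⟩
    apply Prod.ext
    · apply Subtype.ext
      change derOf c (MonoidAlgebra.single (bV n) 1) = β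
      rw [derOf_single, hcb, one_smul, mul_assoc, MonoidAlgebra.single_mul_single, inv_mul_cancel, one_mul,
        ← MonoidAlgebra.one_def, mul_one]
    · apply Subtype.ext
      change derOf c (MonoidAlgebra.single (aV n * bV n) 1) = τ
      rw [derOf_single, hct, one_smul, mul_assoc, MonoidAlgebra.single_mul_single, inv_mul_cancel, one_mul,
        ← MonoidAlgebra.one_def, mul_one]

lemma finrank_der (n : ℕ) (hn : 0 < n) (F : Type*) [Field F] (h2 : (2 : F) ≠ 0) (hnF : (n : F) = 0) :
    Module.finrank F (fDerivations F (MonoidAlgebra F (V8n n))) + 4 * Nat.card (KSet n) = 8 * n := by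
  have hcard := card_V8n n
  have : Finite (V8n n) := Nat.finite_of_card_ne_zero (by omega)
  have : Module.Finite F (MonoidAlgebra F (V8n n)) :=
    Module.Finite.equiv (MonoidAlgebra.coeffLinearEquiv (M := V8n n) (S := F) F).symm
  rw [(LinearEquiv.ofBijective _ (evalGens_bij n F h2 hnF)).finrank_eq, Module.finrank_prod]
  have hb := finrank_anti F h2 (bV n) (z_comm n)
  have ht := finrank_anti F h2 (aV n * bV n) (t_sq_comm n)
  rw [card_fix_b, hcard] at hb
  rw [card_fix_t, hcard] at ht
  omega


/-- If `char F = p` for an odd prime `p` with `gcd(n, p) ≠ 1`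
(equivalently `p ∣ n`), then `Der_F(F V_{8n})` has dimension `4(2n-1)` over `F`
when `n` is odd, and dimension `8(n-1)` when `n` is even. -/
theorem dim_fDerivations_V8n_modular (n : ℕ) (hn : 0 < n) (F : Type*) [Field F]
    (p : ℕ) (hp : p.Prime) (hodd : Odd p) (hgcd : Nat.gcd n p ≠ 1) (hcharp : CharP F p) :
    (Odd n →
      Module.finrank F (fDerivations F (MonoidAlgebra F (V8n n))) = 4 * (2 * n - 1)) ∧
    (Even n →
      Module.finrank F (fDerivations F (MonoidAlgebra F (V8n n))) = 8 * (n - 1)) := by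
  have h2 : (2 : F) ≠ 0 := by
    intro h
    have h' : ((2 : ℕ) : F) = 0 := by exact_mod_cast h
    rw [CharP.cast_eq_zero_iff F p] at h'
    have := (Nat.prime_dvd_prime_iff_eq hp Nat.prime_two).mp h'
    subst this
    revert hodd; decide
  have hnF : (n : F) = 0 := by
    rw [CharP.cast_eq_zero_iff F p]
    by_contra hpn
    exact hgcd (((Nat.Prime.coprime_iff_not_dvd hp).mpr hpn).symm)
  have key := finrank_der n hn F h2 hnF
  constructor
  · intro h
    rw [card_K_odd n hn h] at key
    omega
  · intro h
    rw [card_K_even n hn h] at key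
    omega
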